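/- Let K be a countably infinite field. Then every finite-index subgroup Δ ≤ K* is measure-rigid: the only Δ-invariant and Δ-ergodic Borel probability measures on K̂ (for the dual action) are the point mass δ₁ at the trivial character and the Haar measure m_{K̂}. -/

import Mathlib

open MeasureTheory Filter

noncomputable section

/-- The Pontryagin dual of the additive group of `K`. -/
abbrev AddDual (K : Type*) [AddCommGroup K] [TopologicalSpace K] : Type _ :=
  PontryaginDual (Multiplicative K)

/-- Precomposition of a character with an additive homomorphism. -/
def dualComp {A B : Type*} [AddCommGroup A] [AddCommGroup B]
    [TopologicalSpace A] [DiscreteTopology A] [TopologicalSpace B]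
    (f : A →+ B) (ξ : AddDual B) : AddDual A :=
  ξ.comp ⟨AddMonoidHom.toMultiplicative f, continuous_of_discreteTopology⟩

/-- The dual action of multiplication by `a`: `(dualSmul a ξ) b = ξ (a * b)`. -/
def dualSmul {K : Type*} [Field K] [TopologicalSpace K] [DiscreteTopology K]
    (a : K) (ξ : AddDual K) : AddDual K :=
  dualComp (AddMonoidHom.mulLeft a) ξ

/-!
Every nontrivial character has an infinite `Δ`-orbit, so an invariant finite measure `μ` with no
atom at `1` has no atoms at all. The convolution of `μ` with its inverse `μ.inv` is then also free
of atoms, and its Fourier–Stieltjes coefficients are the squares `|μ̂ b| ^ 2`. Summing the dilates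
of this convolution over the finitely many cosets of `Δ` makes the coefficient at every `b ≠ 0`
equal to one constant `S`. A measure with this property is a combination of the Haar measure and
`S` times the point mass at `1`; having no atom there, it has `S = 0`. As `S` is a sum of squares,
all the coefficients of `μ` away from `0` vanish, so `μ` is a multiple of the Haar measure.
-/

section CosetsAndAtoms

theorem sum_mul_quotient_out_eq {G M : Type*} [Group G] [AddCommMonoid M] (H : Subgroup G)
    [Fintype (G ⧸ H)] {f : G → M} (hf : ∀ g, ∀ h ∈ H, f (g * h) = f g) (g : G) :
    ∑ q : G ⧸ H, f (g * q.out) = ∑ q : G ⧸ H, f q.out := by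
  have f_congr {x y : G} (hxy : (x : G ⧸ H) = y) : f x = f y := by
    simpa using (hf x _ (QuotientGroup.eq.mp hxy)).symm
  calc
    ∑ q : G ⧸ H, f (g * q.out) = ∑ q : G ⧸ H, f (g • q).out :=
      Finset.sum_congr rfl fun q _ => f_congr <| by
        rw [QuotientGroup.out_eq', ← smul_eq_mul, MulAction.Quotient.coe_smul_out]
    _ = ∑ q : G ⧸ H, f q.out := Equiv.sum_comp (MulAction.toPerm g) fun q : G ⧸ H => f q.out

theorem measure_singleton_eq_zero_of_infinite_range {ι X : Type*} [MeasurableSpace X]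
    [MeasurableSingletonClass X] {μ : Measure X} [IsFiniteMeasure μ] {f : ι → X → X}
    (hf : ∀ i, MeasurePreserving (f i) μ μ) {x : X} (hx : (Set.range (f · x)).Infinite) :
    μ {x} = 0 := by
  by_contra hne
  refine measure_ne_top μ _ (hx.meas_eq_top ⟨μ {x}, hne, ?_⟩)
  rintro _ ⟨i, rfl⟩
  calc
    μ {x} ≤ μ (f i ⁻¹' {f i x}) := measure_mono (by simp)
    _ ≤ μ {f i x} := (hf i).measure_preimage_le _

theorem mconv_singleton_eq_zero {G : Type*} [Group G] [MeasurableSpace G] [MeasurableMul₂ G]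
    [MeasurableSingletonClass G] (μ ν : Measure G) [SFinite ν] [NullSingletonClass ν] (x : G) :
    (μ ∗ₘ ν) {x} = 0 := by
  have slice_eq (g : G) :
      Prod.mk g ⁻¹' ((fun p : G × G => p.1 * p.2) ⁻¹' {x}) = {g⁻¹ * x} := by
    ext h
    exact eq_inv_mul_iff_mul_eq.symm
  rw [Measure.mconv, Measure.map_apply measurable_mul (measurableSet_singleton x),
    Measure.prod_apply (measurable_mul (measurableSet_singleton x))]
  simp only [slice_eq, measure_singleton, lintegral_zero]

end CosetsAndAtoms

section CharacterSeparation

theorem exists_injective_addMonoidHom_addCircle_rat_circle :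
    ∃ f : AddCircle (1 : ℚ) →+ Additive Circle, Function.Injective f := by
  let castHom : AddCircle (1 : ℚ) →+ AddCircle (1 : ℝ) :=
    QuotientAddGroup.map _ _ (Rat.castHom ℝ).toAddMonoidHom (by
      rw [AddSubgroup.zmultiples_le]
      simp)
  let circleHom : AddCircle (1 : ℝ) →+ Additive Circle :=
    AddMonoidHom.mk' (fun x => Additive.ofMul x.toCircle) AddCircle.toCircle_add
  have castHom_injective : Function.Injective castHom := by
    rw [injective_iff_map_eq_zero]
    intro x
    induction x using QuotientAddGroup.induction_on with
    | H q =>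
      intro hq
      obtain ⟨n, hn⟩ := (AddCircle.coe_eq_zero_iff (1 : ℝ)).mp hq
      refine (AddCircle.coe_eq_zero_iff (1 : ℚ)).mpr ⟨n, ?_⟩
      refine Rat.cast_injective (α := ℝ) ?_
      simpa using! hn
  exact ⟨circleHom.comp castHom,
    (AddCircle.injective_toCircle one_ne_zero).comp castHom_injective⟩

theorem exists_pontryaginDual_apply_ne_one {A : Type*} [CommGroup A] [TopologicalSpace A]
    [DiscreteTopology A] {a : A} (ha : a ≠ 1) : ∃ χ : PontryaginDual A, χ a ≠ 1 := by
  obtain ⟨c, hc⟩ := CharacterModule.exists_character_apply_ne_zero_of_ne_zero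
    (A := Additive A) (a := Additive.ofMul a) ha
  obtain ⟨f, hf⟩ := exists_injective_addMonoidHom_addCircle_rat_circle
  let φ : A →* Circle := MonoidHom.toAdditive.symm (f.comp c)
  refine ⟨(⟨φ, continuous_of_discreteTopology⟩ : A →ₜ* Circle), fun h => hc ?_⟩
  exact (injective_iff_map_eq_zero f).mp hf _ h

end CharacterSeparation

section FourierStieltjes

open scoped BoundedContinuousFunction ComplexConjugate

section Evaluation

variable {A : Type*} [Monoid A] [TopologicalSpace A]

theorem continuous_pontryaginDual_apply (a : A) : Continuous fun χ : PontryaginDual A => χ a :=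
  (continuous_eval_const (F := C(A, Circle)) a).comp
    (ContinuousMonoidHom.isInducing_toContinuousMap A Circle).continuous

instance secondCountableTopology_pontryaginDual [SecondCountableTopology A]
    [LocallyCompactSpace A] : SecondCountableTopology (PontryaginDual A) :=
  (ContinuousMonoidHom.isInducing_toContinuousMap A Circle).secondCountableTopology

instance polishSpace_pontryaginDual [Countable A] [DiscreteTopology A] :
    PolishSpace (PontryaginDual A) := by
  let := TopologicalSpace.metrizableSpaceMetric (PontryaginDual A)
  infer_instance

/-- Evaluation of characters at `a`, as a bounded continuous function on the dual. The linear span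
of these functions is the algebra of trigonometric polynomials. -/
def dualEval : A →* (PontryaginDual A →ᵇ ℂ) where
  toFun a := BoundedContinuousFunction.ofNormedAddCommGroup (fun χ => (χ a : ℂ))
    (continuous_subtype_val.comp (continuous_pontryaginDual_apply a)) 1
    fun χ => (Circle.norm_coe (χ a)).le
  map_one' := by ext χ; simp
  map_mul' a b := by ext χ; simp

@[simp]
theorem dualEval_apply (a : A) (χ : PontryaginDual A) : dualEval a χ = (χ a : ℂ) := rfl

end Evaluation

variable {A : Type*} [CommGroup A] [TopologicalSpace A]

theorem star_dualEval (a : A) : star (dualEval a) = dualEval a⁻¹ := by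
  ext χ
  exact (Circle.coe_inv_eq_conj (χ a)).symm.trans (by simp)

theorem adjoin_range_dualEval_toSubmodule :
    Subalgebra.toSubmodule
        (StarAlgebra.adjoin ℂ (Set.range (dualEval : A → PontryaginDual A →ᵇ ℂ))).toSubalgebra =
      Submodule.span ℂ (Set.range (dualEval : A → PontryaginDual A →ᵇ ℂ)) := by
  have star_range : star (Set.range (dualEval : A → PontryaginDual A →ᵇ ℂ)) ⊆
      Set.range (dualEval : A → PontryaginDual A →ᵇ ℂ) := by
    rintro f ⟨a, ha⟩
    exact ⟨a⁻¹, by rw [← star_dualEval, ha, star_star]⟩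
  rw [StarAlgebra.adjoin_eq_span, Set.union_eq_left.mpr star_range, ← MonoidHom.coe_mrange,
    Submonoid.closure_eq]

/-- The Fourier–Stieltjes coefficient of a measure on the dual of `A` at `a`, in the convention
without complex conjugation. -/
def fourierStieltjes [MeasurableSpace (PontryaginDual A)] (μ : Measure (PontryaginDual A))
    (a : A) : ℂ :=
  ∫ χ, dualEval a χ ∂μ

variable [MeasurableSpace (PontryaginDual A)] {μ ν : Measure (PontryaginDual A)}

@[simp]
theorem fourierStieltjes_one (μ : Measure (PontryaginDual A)) :
    fourierStieltjes μ 1 = μ.real Set.univ := by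
  simp [fourierStieltjes]

theorem norm_fourierStieltjes_le (μ : Measure (PontryaginDual A)) [IsFiniteMeasure μ] (a : A) :
    ‖fourierStieltjes μ a‖ ≤ μ.real Set.univ := by
  simpa only [fourierStieltjes, one_mul] using norm_integral_le_of_norm_le_const (f := dualEval a)
    (.of_forall fun χ => (Circle.norm_coe (χ a)).le)

theorem fourierStieltjes_smul_measure (c : ENNReal) (μ : Measure (PontryaginDual A)) (a : A) :
    fourierStieltjes (c • μ) a = c.toReal • fourierStieltjes μ a :=
  integral_smul_measure _ c

variable [BorelSpace (PontryaginDual A)]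

theorem fourierStieltjes_dirac_one (a : A) :
    fourierStieltjes (Measure.dirac (1 : PontryaginDual A)) a = 1 := by
  rw [fourierStieltjes, integral_dirac]
  simp

theorem fourierStieltjes_add_measure (μ ν : Measure (PontryaginDual A)) [IsFiniteMeasure μ]
    [IsFiniteMeasure ν] (a : A) :
    fourierStieltjes (μ + ν) a = fourierStieltjes μ a + fourierStieltjes ν a :=
  integral_add_measure ((dualEval a).integrable μ) ((dualEval a).integrable ν)

theorem fourierStieltjes_finsetSum_measure {ι : Type*} (s : Finset ι)
    (μ : ι → Measure (PontryaginDual A)) [∀ i, IsFiniteMeasure (μ i)] (a : A) :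
    fourierStieltjes (∑ i ∈ s, μ i) a = ∑ i ∈ s, fourierStieltjes (μ i) a :=
  integral_finsetSum_measure fun i _ => (dualEval a).integrable (μ i)

theorem fourierStieltjes_map {B : Type*} [CommGroup B] [TopologicalSpace B]
    [MeasurableSpace (PontryaginDual B)] [BorelSpace (PontryaginDual B)] (f : A →ₜ* B)
    (μ : Measure (PontryaginDual B)) (a : A) :
    fourierStieltjes (μ.map (PontryaginDual.map f)) a = fourierStieltjes μ (f a) := by
  rw [fourierStieltjes, integral_map (map_continuous (PontryaginDual.map f)).aemeasurable
    (dualEval a).continuous.aestronglyMeasurable]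
  rfl

theorem fourierStieltjes_inv (μ : Measure (PontryaginDual A)) (a : A) :
    fourierStieltjes μ.inv a = conj (fourierStieltjes μ a) := by
  rw [fourierStieltjes, Measure.inv, integral_map measurable_inv.aemeasurable
    (dualEval a).continuous.aestronglyMeasurable, fourierStieltjes, ← integral_conj]
  refine integral_congr_ae (.of_forall fun χ => ?_)
  exact Circle.coe_inv_eq_conj (χ a)

theorem fourierStieltjes_mconv [SecondCountableTopology (PontryaginDual A)]
    (μ ν : Measure (PontryaginDual A)) [IsFiniteMeasure μ] [IsFiniteMeasure ν] (a : A) :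
    fourierStieltjes (μ ∗ₘ ν) a = fourierStieltjes μ a * fourierStieltjes ν a := by
  have eval_mul (χ ψ : PontryaginDual A) :
      dualEval a (χ * ψ) = dualEval a χ * dualEval a ψ := Circle.coe_mul (χ a) (ψ a)
  rw [fourierStieltjes, integral_mconv ((dualEval a).integrable _)]
  simp only [eval_mul, integral_const_mul, integral_mul_const, fourierStieltjes]

theorem fourierStieltjes_inv_mconv_self [SecondCountableTopology (PontryaginDual A)]
    (μ : Measure (PontryaginDual A)) [IsFiniteMeasure μ] (a : A) :
    fourierStieltjes (μ.inv ∗ₘ μ) a = ((‖fourierStieltjes μ a‖ ^ 2 : ℝ) : ℂ) := by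
  have : IsFiniteMeasure μ.inv := inferInstanceAs (IsFiniteMeasure (μ.map Inv.inv))
  rw [fourierStieltjes_mconv, fourierStieltjes_inv, Complex.conj_mul', Complex.ofReal_pow]

variable [DiscreteTopology A]

theorem fourierStieltjes_eq_zero_of_isMulLeftInvariant (μ : Measure (PontryaginDual A))
    [μ.IsMulLeftInvariant] {a : A} (ha : a ≠ 1) : fourierStieltjes μ a = 0 := by
  obtain ⟨χ, hχ⟩ := exists_pontryaginDual_apply_ne_one ha
  have translate : (χ a : ℂ) * fourierStieltjes μ a = fourierStieltjes μ a := by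
    rw [fourierStieltjes, ← integral_const_mul, ← integral_mul_left_eq_self (dualEval a) χ]
    rfl
  exact (mul_left_eq_self₀.mp translate).resolve_left fun h => hχ (Subtype.ext h)

variable [Countable A]

theorem ext_of_fourierStieltjes [IsFiniteMeasure μ] [IsFiniteMeasure ν]
    (h : ∀ a, fourierStieltjes μ a = fourierStieltjes ν a) : μ = ν := by
  refine ext_of_forall_mem_subalgebra_integral_eq_of_polish (𝕜 := ℂ)
    (A := StarAlgebra.adjoin ℂ (Set.range dualEval)) ?_ fun g hg => ?_
  · intro χ ψ hχψ
    obtain ⟨a, ha⟩ := DFunLike.ne_iff.mp hχψ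
    exact ⟨_, ⟨_, ⟨dualEval a, StarAlgebra.subset_adjoin ℂ _ ⟨a, rfl⟩, rfl⟩, rfl⟩,
      fun h => ha (Subtype.ext h)⟩
  · replace hg : g ∈ Submodule.span ℂ (Set.range (dualEval : A → PontryaginDual A →ᵇ ℂ)) :=
      adjoin_range_dualEval_toSubmodule.le hg
    induction hg using Submodule.span_induction with
    | mem f hf => obtain ⟨a, rfl⟩ := hf; exact h a
    | zero => simp
    | add f₁ f₂ _ _ h₁ h₂ =>
      simp only [BoundedContinuousFunction.coe_add, Pi.add_apply]
      rw [integral_add (f₁.integrable μ) (f₂.integrable μ),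
        integral_add (f₁.integrable ν) (f₂.integrable ν), h₁, h₂]
    | smul c f _ hf =>
      simp only [BoundedContinuousFunction.coe_smul, integral_smul, hf]

theorem eq_smul_of_fourierStieltjes_eq_zero [IsFiniteMeasure μ] (m : Measure (PontryaginDual A))
    [m.IsMulLeftInvariant] [IsProbabilityMeasure m]
    (h : ∀ a ≠ 1, fourierStieltjes μ a = 0) : μ = μ Set.univ • m := by
  have : IsFiniteMeasure (μ Set.univ • m) := m.smul_finite (measure_ne_top _ _)
  refine ext_of_fourierStieltjes fun a => ?_
  rw [fourierStieltjes_smul_measure]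
  rcases eq_or_ne a 1 with rfl | ha
  · simp [Measure.real]
  · rw [h a ha, fourierStieltjes_eq_zero_of_isMulLeftInvariant m ha, smul_zero]

theorem le_measureReal_singleton_one_of_fourierStieltjes_eq [Nontrivial A] [IsFiniteMeasure ν]
    {c : ℝ} (h : ∀ a ≠ 1, fourierStieltjes ν a = c) : c ≤ ν.real {1} := by
  rcases lt_or_ge c 0 with hc | hc
  · exact hc.le.trans measureReal_nonneg
  lift c to NNReal using hc
  have c_le : (c : ℝ) ≤ ν.real Set.univ := by
    obtain ⟨a, ha⟩ := exists_ne (1 : A)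
    simpa [h a ha] using norm_fourierStieltjes_le ν a
  obtain ⟨d, hd⟩ : ∃ d : NNReal, ν.real Set.univ = d + c :=
    ⟨(ν.real Set.univ - c).toNNReal, by rw [Real.coe_toNNReal _ (sub_nonneg.mpr c_le)]; ring⟩
  let m : Measure (PontryaginDual A) := Measure.haarMeasure ⊤
  have : IsProbabilityMeasure m := ⟨Measure.haarMeasure_self⟩
  have decomposition : ν = (d : ENNReal) • m + (c : ENNReal) • Measure.dirac 1 := by
    have := m.smul_finite (ENNReal.coe_ne_top (r := d))
    have := (Measure.dirac (1 : PontryaginDual A)).smul_finite (ENNReal.coe_ne_top (r := c))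
    refine ext_of_fourierStieltjes fun a => ?_
    rw [fourierStieltjes_add_measure, fourierStieltjes_smul_measure,
      fourierStieltjes_smul_measure, fourierStieltjes_dirac_one]
    rcases eq_or_ne a 1 with rfl | ha
    · simp [hd]
    · simp [h a ha, fourierStieltjes_eq_zero_of_isMulLeftInvariant m ha]
  have c_le_apply : (c : ENNReal) ≤ ν {1} := by
    rw [decomposition]
    simp
  simpa [Measure.real] using ENNReal.toReal_mono (measure_ne_top ν _) c_le_apply

end FourierStieltjes

section DualAction

variable {K : Type*} [Field K] [TopologicalSpace K] [DiscreteTopology K]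

theorem dualSmul_apply (a : K) (ξ : AddDual K) (b : K) :
    dualSmul a ξ (Multiplicative.ofAdd b) = ξ (Multiplicative.ofAdd (a * b)) := rfl

theorem continuous_dualSmul (a : K) : Continuous (dualSmul a : AddDual K → AddDual K) :=
  (PontryaginDual.map (⟨AddMonoidHom.toMultiplicative (AddMonoidHom.mulLeft a),
    continuous_of_discreteTopology⟩ : Multiplicative K →ₜ* Multiplicative K)).continuous_toFun

theorem dualSmul_eq_one_iff {a : K} (ha : a ≠ 0) {ξ : AddDual K} : dualSmul a ξ = 1 ↔ ξ = 1 := by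
  constructor
  · intro h
    refine PontryaginDual.ext fun b => ?_
    have := DFunLike.congr_fun h (Multiplicative.ofAdd (a⁻¹ * b.toAdd))
    rwa [dualSmul_apply, mul_inv_cancel_left₀ ha] at this
  · rintro rfl
    rfl

theorem dualSmul_sub (a b : K) (ξ : AddDual K) :
    dualSmul (a - b) ξ = dualSmul a ξ / dualSmul b ξ := by
  refine PontryaginDual.ext fun c => ?_
  change ξ (Multiplicative.ofAdd ((a - b) * c.toAdd)) =
    ξ (Multiplicative.ofAdd (a * c.toAdd)) / ξ (Multiplicative.ofAdd (b * c.toAdd))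
  rw [sub_mul, ofAdd_sub, map_div]

theorem dualSmul_left_injective {ξ : AddDual K} (hξ : ξ ≠ 1) :
    Function.Injective fun a : K => dualSmul a ξ := by
  intro a b hab
  by_contra hne
  refine hξ ((dualSmul_eq_one_iff (sub_ne_zero.mpr hne)).mp ?_)
  rw [dualSmul_sub, div_eq_one]
  exact hab

theorem dualSmul_preimage_singleton_one {a : K} (ha : a ≠ 0) :
    dualSmul a ⁻¹' {(1 : AddDual K)} = {1} :=
  Set.ext fun _ => dualSmul_eq_one_iff ha

variable [MeasurableSpace (AddDual K)] [BorelSpace (AddDual K)]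

theorem fourierStieltjes_map_dualSmul (μ : Measure (AddDual K)) (a b : K) :
    fourierStieltjes (μ.map (dualSmul a)) (Multiplicative.ofAdd b) =
      fourierStieltjes μ (Multiplicative.ofAdd (a * b)) :=
  fourierStieltjes_map ⟨AddMonoidHom.toMultiplicative (AddMonoidHom.mulLeft a),
    continuous_of_discreteTopology⟩ μ _

theorem fourierStieltjes_units_mul_of_map_dualSmul_eq {μ : Measure (AddDual K)} {a : Kˣ}
    (h : μ.map (dualSmul (a : K)) = μ) (u : Kˣ) :
    fourierStieltjes μ (Multiplicative.ofAdd ((u * a : Kˣ) : K)) =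
      fourierStieltjes μ (Multiplicative.ofAdd (u : K)) := by
  rw [mul_comm, Units.val_mul, ← fourierStieltjes_map_dualSmul, h]

theorem fourierStieltjes_sum_map_dualSmul_out {μ : Measure (AddDual K)} [IsFiniteMeasure μ]
    (Δ : Subgroup Kˣ) [Fintype (Kˣ ⧸ Δ)]
    (hμ : ∀ u : Kˣ, ∀ a ∈ Δ, fourierStieltjes μ (Multiplicative.ofAdd ((u * a : Kˣ) : K)) =
      fourierStieltjes μ (Multiplicative.ofAdd (u : K))) {b : K} (hb : b ≠ 0) :
    fourierStieltjes (∑ q : Kˣ ⧸ Δ, μ.map (dualSmul (q.out : K))) (Multiplicative.ofAdd b) =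
      ∑ q : Kˣ ⧸ Δ, fourierStieltjes μ (Multiplicative.ofAdd (q.out : K)) := by
  lift b to Kˣ using hb.isUnit
  calc
    _ = ∑ q : Kˣ ⧸ Δ, fourierStieltjes μ (Multiplicative.ofAdd ((b * q.out : Kˣ) : K)) := by
      rw [fourierStieltjes_finsetSum_measure]
      simp only [fourierStieltjes_map_dualSmul, Units.val_mul, mul_comm]
    _ = _ := sum_mul_quotient_out_eq Δ
      (f := fun u : Kˣ => fourierStieltjes μ (Multiplicative.ofAdd (u : K))) hμ b

theorem map_dualSmul_singleton_one (μ : Measure (AddDual K)) {a : K} (ha : a ≠ 0) :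
    μ.map (dualSmul a) {1} = μ {1} := by
  rw [Measure.map_apply (continuous_dualSmul a).measurable (measurableSet_singleton 1),
    dualSmul_preimage_singleton_one ha]

theorem map_dualSmul_restrict_compl_singleton_one {μ : Measure (AddDual K)} {a : K} (ha : a ≠ 0)
    (h : μ.map (dualSmul a) = μ) :
    (μ.restrict {1}ᶜ).map (dualSmul a) = μ.restrict {1}ᶜ := by
  have := (MeasurePreserving.mk (continuous_dualSmul a).measurable h).restrict_preimage
    (measurableSet_singleton (1 : AddDual K)).compl
  rw [Set.preimage_compl, dualSmul_preimage_singleton_one ha] at this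
  exact this.map_eq

end DualAction

section InvariantMeasures

instance countable_multiplicative {α : Type*} [Countable α] : Countable (Multiplicative α) :=
  Multiplicative.toAdd.injective.countable

variable {K : Type*} [Field K] [Infinite K]

theorem infinite_of_finiteIndex_units (Δ : Subgroup Kˣ) [Δ.FiniteIndex] : Infinite Δ := by
  have infinite_units : Infinite Kˣ :=
    unitsEquivNeZero.infinite_iff.mpr (Set.finite_singleton (0 : K)).infinite_compl.to_subtype
  by_contra hfin
  rw [not_infinite_iff_finite] at hfin
  exact infinite_units.not_finite (Δ.finite_iff_finite_and_finiteIndex.mpr ⟨hfin, inferInstance⟩)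

variable [TopologicalSpace K] [DiscreteTopology K]
  [MeasurableSpace (AddDual K)] [BorelSpace (AddDual K)]
  {Δ : Subgroup Kˣ} [Δ.FiniteIndex] {μ : Measure (AddDual K)} [IsFiniteMeasure μ]

theorem nullSingletonClass_of_map_dualSmul_eq (hinv : ∀ a ∈ Δ, μ.map (dualSmul (a : K)) = μ)
    (h1 : μ {1} = 0) : NullSingletonClass μ where
  measure_singleton ξ := by
    rcases eq_or_ne ξ 1 with rfl | hξ
    · exact h1
    have := infinite_of_finiteIndex_units Δ
    have orbit_injective : Function.Injective fun a : Δ => dualSmul ((a : Kˣ) : K) ξ :=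
      (dualSmul_left_injective hξ).comp (Units.val_injective.comp Subtype.val_injective)
    exact measure_singleton_eq_zero_of_infinite_range (f := fun a : Δ => dualSmul ((a : Kˣ) : K))
      (fun a => ⟨(continuous_dualSmul _).measurable, hinv a a.2⟩)
      (Set.infinite_range_of_injective orbit_injective)

variable [Countable K]

theorem fourierStieltjes_quotient_out_eq_zero_of_map_dualSmul_eq
    (hinv : ∀ a ∈ Δ, μ.map (dualSmul (a : K)) = μ) (h1 : μ {1} = 0) (q : Kˣ ⧸ Δ) :
    fourierStieltjes μ (Multiplicative.ofAdd (q.out : K)) = 0 := by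
  have : Fintype (Kˣ ⧸ Δ) := Fintype.ofFinite _
  have := nullSingletonClass_of_map_dualSmul_eq hinv h1
  have coeff_mul (u : Kˣ) (a : Kˣ) (ha : a ∈ Δ) :
      fourierStieltjes (μ.inv ∗ₘ μ) (Multiplicative.ofAdd ((u * a : Kˣ) : K)) =
        fourierStieltjes (μ.inv ∗ₘ μ) (Multiplicative.ofAdd (u : K)) := by
    rw [fourierStieltjes_inv_mconv_self, fourierStieltjes_inv_mconv_self,
      fourierStieltjes_units_mul_of_map_dualSmul_eq (hinv a ha)]
  let ν : Measure (AddDual K) := ∑ q : Kˣ ⧸ Δ, (μ.inv ∗ₘ μ).map (dualSmul (q.out : K))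
  have coeff_ν : ∀ x ≠ (1 : Multiplicative K), fourierStieltjes ν x =
      ((∑ q : Kˣ ⧸ Δ, ‖fourierStieltjes μ (Multiplicative.ofAdd (q.out : K))‖ ^ 2 : ℝ) : ℂ) := by
    intro x hx
    have coeff_sum := fourierStieltjes_sum_map_dualSmul_out Δ coeff_mul (b := x.toAdd) hx
    simpa only [fourierStieltjes_inv_mconv_self, ← Complex.ofReal_sum, ofAdd_toAdd] using coeff_sum
  have ν_singleton : ν {1} = 0 := by
    rw [Measure.finsetSum_apply]
    refine Finset.sum_eq_zero fun q _ => ?_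
    rw [map_dualSmul_singleton_one _ q.out.ne_zero, mconv_singleton_eq_zero]
  have sum_le_zero := le_measureReal_singleton_one_of_fourierStieltjes_eq coeff_ν
  rw [Measure.real, ν_singleton, ENNReal.toReal_zero] at sum_le_zero
  have sq_eq_zero := (Finset.sum_eq_zero_iff_of_nonneg fun _ _ => sq_nonneg _).mp
    (sum_le_zero.antisymm (Finset.sum_nonneg fun _ _ => sq_nonneg _)) q (Finset.mem_univ q)
  rwa [sq_eq_zero_iff, norm_eq_zero] at sq_eq_zero

theorem fourierStieltjes_eq_zero_of_map_dualSmul_eq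
    (hinv : ∀ a ∈ Δ, μ.map (dualSmul (a : K)) = μ) (h1 : μ {1} = 0) {b : K} (hb : b ≠ 0) :
    fourierStieltjes μ (Multiplicative.ofAdd b) = 0 := by
  lift b to Kˣ using hb.isUnit
  obtain ⟨a, ha⟩ := QuotientGroup.mk_out_eq_mul Δ b
  rw [← fourierStieltjes_units_mul_of_map_dualSmul_eq (hinv a a.2), ← ha]
  exact fourierStieltjes_quotient_out_eq_zero_of_map_dualSmul_eq hinv h1 b

theorem statement17_general (mK : Measure (AddDual K)) [mK.IsMulLeftInvariant]
    [IsProbabilityMeasure mK] (hinv : ∀ a ∈ Δ, μ.map (dualSmul (a : K)) = μ) :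
    μ = μ {1} • Measure.dirac 1 + μ {1}ᶜ • mK := by
  have coeff_eq_zero : ∀ x ≠ (1 : Multiplicative K),
      fourierStieltjes (μ.restrict {1}ᶜ) x = 0 := fun x hx =>
    fourierStieltjes_eq_zero_of_map_dualSmul_eq (b := x.toAdd)
      (fun a ha => map_dualSmul_restrict_compl_singleton_one a.ne_zero (hinv a ha)) (by simp) hx
  calc
    μ = μ.restrict {1} + μ.restrict {1}ᶜ :=
      (Measure.restrict_add_restrict_compl (measurableSet_singleton 1)).symm
    _ = μ {1} • Measure.dirac 1 + μ {1}ᶜ • mK := by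
      rw [Measure.restrict_singleton, eq_smul_of_fourierStieltjes_eq_zero mK coeff_eq_zero,
        Measure.restrict_apply_univ]

end InvariantMeasures

/-- Every finite-index subgroup `Δ ≤ K^*` of the multiplicative group of a countably
infinite field is measure-rigid: the only `Δ`-invariant and `Δ`-ergodic Borel probability
measures on `K̂` are the point mass at the trivial character and the Haar measure. -/
theorem statement17
    {K : Type*} [Field K] [Countable K] [Infinite K]
    [TopologicalSpace K] [DiscreteTopology K]
    [MeasurableSpace (AddDual K)] [BorelSpace (AddDual K)]
    (mK : Measure (AddDual K)) [mK.IsHaarMeasure] [IsProbabilityMeasure mK]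
    (Δ : Subgroup Kˣ) [Δ.FiniteIndex]
    (μ : Measure (AddDual K)) [IsProbabilityMeasure μ]
    (hinv : ∀ a ∈ Δ, μ.map (dualSmul ((a : Kˣ) : K)) = μ)
    (herg : ∀ s : Set (AddDual K), MeasurableSet s →
      (∀ a ∈ Δ, dualSmul ((a : Kˣ) : K) ⁻¹' s = s) → μ s = 0 ∨ μ s = 1) :
    μ = MeasureTheory.Measure.dirac 1 ∨ μ = mK := by
  rw [statement17_general mK hinv, prob_compl_eq_one_sub (measurableSet_singleton 1)]
  rcases herg {1} (measurableSet_singleton 1) fun a _ =>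
    dualSmul_preimage_singleton_one a.ne_zero with h | h <;> simp [h]

end
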